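/- Let V and X be finite-dimensional real vector spaces, let τ : V → X be a surjective linear map, and let n = dim X. Call a form α ∈ ⋀^m V* (m−1)-horizontal if ι_w ι_v α = 0 for all v, w ∈ ker τ. Let S ⊆ ⋀^n V* be a subspace all of whose elements are (n−1)-horizontal and which contains τ*(⋀^n X*), the image of the pullback map τ* : ⋀^n X* → ⋀^n V*. Let 0 ≤ a ≤ n and let γ ∈ ⋀^a V* be such that γ ∧ τ*ε ∈ S for every ε ∈ ⋀^{n−a} X*. Then γ lies in the linear span of {ι_u α : u ∈ ⋀^{n−a} V, α ∈ S}. -/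

import Mathlib

/-! Choose a basis `e_i` of `X`, lift it to `V` through a section `s` of `τ`, and complete it to a basis
of `V` by vectors of `ker τ`, called vertical. Put `m = n - a`, and for an `m`-element set `I` of
indices let `e_I` be the lifted `m`-vector and `e^I` the dual basic form. If all `γ ∧ τ*ε` lie in
`S`, then `δ(γ) = ∑_I ι_{e_I} (γ ∧ τ*e^I)` is a combination of contractions of elements of `S`.

Evaluated on a tuple of basis vectors, the term of index `I` is `± γ` when the tuple avoids `e_I`
and `0` otherwise (`exists_basic_form`), the sign depending only on `a` and `m`. A tuple with `q`
vertical entries avoids `m + q` of the `e_i`, so up to that sign `δ` multiplies the corresponding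
coefficient of `γ` by `(m + q).choose m` (`exists_contraction_sum`).

If `q ≥ 2`, some `I` is avoided by the tuple, and horizontality of `γ ∧ τ*e^I` forces the
coefficient to vanish (`eq_zero_of_two_vertical`). For `q = 1` the factor is `m + 1` and for `q = 0`
it is `1`. The basic part `γ₀` of `γ`, which carries the coefficients with `q = 0`, satisfies
`γ₀ ∧ τ*ε ∈ S` as well, because `S` contains all basic `n`-forms. Hence, up to sign,
`γ = (m + 1)⁻¹ δ(γ) + (1 - (m + 1)⁻¹) δ(γ₀)`, which lies in the span (`criterion_add`).
-/

open Module
open scoped TensorProduct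

noncomputable section

namespace GPB

variable {V : Type*} [AddCommGroup V] [Module ℝ V]

/-- The product of a `p`-vector and a `q`-vector is a `(p+q)`-vector. -/
theorem wedge_mem {p q r : ℕ} (h : p + q = r) {x y : ExteriorAlgebra ℝ V}
    (hx : x ∈ ⋀[ℝ]^p V) (hy : y ∈ ⋀[ℝ]^q V) : x * y ∈ ⋀[ℝ]^r V := by
  subst h
  show x * y ∈ LinearMap.range (ExteriorAlgebra.ι ℝ : V →ₗ[ℝ] ExteriorAlgebra ℝ V) ^ (p + q)
  rw [pow_add]
  exact Submodule.mul_mem_mul hx hy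

/-- The wedge (exterior) product of multivectors, as a bilinear map
`⋀^p V × ⋀^q V → ⋀^r V` (where `p + q = r`). -/
def wedgeBil {p q r : ℕ} (h : p + q = r) :
    ⋀[ℝ]^p V →ₗ[ℝ] ⋀[ℝ]^q V →ₗ[ℝ] ⋀[ℝ]^r V :=
  LinearMap.mk₂ ℝ (fun u w => ⟨u.1 * w.1, wedge_mem h u.2 w.2⟩)
    (fun u u' w => Subtype.ext (by simp [add_mul]))
    (fun c u w => Subtype.ext (by simp [smul_mul_assoc]))
    (fun u w w' => Subtype.ext (by simp [mul_add]))
    (fun c u w => Subtype.ext (by simp [mul_smul_comm]))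

/-- Contraction of an `r`-form by a `p`-multivector (`p + q = r`):
`(ι_u α) w = α (u ∧ w)`.  Bilinear in `u` and `α`. -/
def contrBil {p q r : ℕ} (h : p + q = r) :
    ⋀[ℝ]^p V →ₗ[ℝ] Dual ℝ (⋀[ℝ]^r V) →ₗ[ℝ] Dual ℝ (⋀[ℝ]^q V) :=
  (LinearMap.llcomp ℝ (⋀[ℝ]^q V) (⋀[ℝ]^r V) ℝ).flip.comp (wedgeBil h)

/-- A vector `X : V` as an element of `⋀^1 V`. -/
def ιOne (X : V) : ⋀[ℝ]^1 V :=
  ⟨ExteriorAlgebra.ι ℝ X, by simpa only [pow_one] using LinearMap.mem_range_self _ X⟩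

/-- `ιMulti` with values in the `n`-th exterior power. -/
def ιMultiP (n : ℕ) : V [⋀^Fin n]→ₗ[ℝ] (⋀[ℝ]^n V) :=
  (ExteriorAlgebra.ιMulti ℝ n).codRestrict (⋀[ℝ]^n V)
    (fun v => ExteriorAlgebra.ιMulti_range ℝ n (Set.mem_range_self v))

/-- A linear functional on `⋀^n V`, seen as an alternating `n`-form on `V`. -/
def toAlt {n : ℕ} : Dual ℝ (⋀[ℝ]^n V) →ₗ[ℝ] (V [⋀^Fin n]→ₗ[ℝ] ℝ) where
  toFun θ := θ.compAlternatingMap (ιMultiP n)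
  map_add' _ _ := rfl
  map_smul' _ _ := rfl

/-- A linear map on `⋀^n V` built out of an alternating `n`-multilinear map. -/
def extendL {n : ℕ} {N : Type*} [AddCommGroup N] [Module ℝ N] :
    (V [⋀^Fin n]→ₗ[ℝ] N) →ₗ[ℝ] (⋀[ℝ]^n V →ₗ[ℝ] N) :=
  (LinearMap.lcomp ℝ N (Submodule.subtype (⋀[ℝ]^n V))).comp
    (ExteriorAlgebra.liftAlternating.comp
      (LinearMap.single ℝ (fun i => V [⋀^Fin i]→ₗ[ℝ] N) n))

/-- The wedge product of exterior forms (functionals on exterior powers),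
as a bilinear map. -/
def formWedgeBil {r m t : ℕ} (h : r + m = t) :
    Dual ℝ (⋀[ℝ]^r V) →ₗ[ℝ] Dual ℝ (⋀[ℝ]^m V) →ₗ[ℝ] Dual ℝ (⋀[ℝ]^t V) := by
  subst h
  exact TensorProduct.curry
    (extendL.comp
      (((AlternatingMap.domDomCongrₗ ℝ finSumFinEquiv).toLinearMap).comp
        ((LinearMap.compAlternatingMapₗ ℝ (TensorProduct.lid ℝ ℝ).toLinearMap).comp
          (AlternatingMap.domCoprod'.comp (TensorProduct.map toAlt toAlt)))))

/-- Contraction of a `c`-form `γ` by a multivector-valued form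
`T ∈ ⋀^r V* ⊗ ⋀^q V`:  on decomposables, `ι_{θ ⊗ v} γ = θ ∧ (ι_v γ)`.
Here `q + s = c` and `r + s = d`. -/
def iotaT {r q c d : ℕ} (s : ℕ) (h₁ : q + s = c) (h₂ : r + s = d) :
    (Dual ℝ (⋀[ℝ]^r V) ⊗[ℝ] ⋀[ℝ]^q V) →ₗ[ℝ]
      Dual ℝ (⋀[ℝ]^c V) →ₗ[ℝ] Dual ℝ (⋀[ℝ]^d V) := by
  subst h₁; subst h₂
  exact TensorProduct.lift
    (((LinearMap.llcomp ℝ (Dual ℝ (⋀[ℝ]^(q+s) V)) (Dual ℝ (⋀[ℝ]^s V))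
          (Dual ℝ (⋀[ℝ]^(r+s) V))).comp (formWedgeBil rfl)).compl₂ (contrBil rfl))

/-- The canonical map `⋀^k V* ⊗ ⋀^a V → Hom(⋀^a V*, ⋀^k V*)`,
`θ ⊗ u ↦ (α ↦ α (u) • θ)`. -/
def pairHom (k a : ℕ) :
    (Dual ℝ (⋀[ℝ]^k V) ⊗[ℝ] ⋀[ℝ]^a V) →ₗ[ℝ]
      (Dual ℝ (⋀[ℝ]^a V) →ₗ[ℝ] Dual ℝ (⋀[ℝ]^k V)) :=
  (dualTensorHom ℝ (Dual ℝ (⋀[ℝ]^a V)) (Dual ℝ (⋀[ℝ]^k V))).comp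
    ((TensorProduct.map (Dual.eval ℝ (⋀[ℝ]^a V)) LinearMap.id).comp
      (TensorProduct.comm ℝ (Dual ℝ (⋀[ℝ]^k V)) (⋀[ℝ]^a V)).toLinearMap)


/-- The linear map `⋀^m V → ⋀^m X` induced by a linear map `τ : V → X`. -/
def powMap {X : Type*} [AddCommGroup X] [Module ℝ X] (m : ℕ) (τ : V →ₗ[ℝ] X) :
    ⋀[ℝ]^m V →ₗ[ℝ] ⋀[ℝ]^m X :=
  extendL ((ιMultiP m).compLinearMap τ)

/-! ### Evaluation on decomposable multivectors -/

@[simp] lemma extendL_ιMultiP {n : ℕ} {N : Type*} [AddCommGroup N] [Module ℝ N]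
    (f : V [⋀^Fin n]→ₗ[ℝ] N) (v : Fin n → V) : extendL f (ιMultiP n v) = f v := by
  simp [extendL, ιMultiP, ExteriorAlgebra.liftAlternating_apply_ιMulti]

@[simp] lemma powMap_ιMultiP {X : Type*} [AddCommGroup X] [Module ℝ X] (m : ℕ)
    (τ : V →ₗ[ℝ] X) (v : Fin m → V) :
    powMap m τ (ιMultiP m v) = ιMultiP m (fun i => τ (v i)) := by
  simp [powMap]

/-- Forms are determined by their values on injective tuples of basis vectors. -/
lemma dual_ext {n : ℕ} {ι : Type*} (b : Basis ι ℝ V) {α β : Dual ℝ (⋀[ℝ]^n V)}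
    (h : ∀ w : Fin n → ι, Function.Injective w →
      α (ιMultiP n fun i => b (w i)) = β (ιMultiP n fun i => b (w i))) : α = β := by
  apply exteriorPower.linearMap_ext
  exact Basis.ext_alternating b h

lemma ιMultiP_append {a m n : ℕ} (h : m + a = n) (u : Fin m → V) (w : Fin a → V) :
    wedgeBil h (ιMultiP m u) (ιMultiP a w) =
      ιMultiP n (fun i => Fin.append u w (Fin.cast h.symm i)) := by
  subst h
  apply Subtype.ext
  simp only [wedgeBil, LinearMap.mk₂_apply, ιMultiP, AlternatingMap.codRestrict_apply_coe,
    ExteriorAlgebra.ιMulti_apply, Fin.cast_eq_self]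
  rw [← List.prod_append, ← List.ofFn_fin_append]
  congr 2
  funext i
  refine Fin.addCases (fun i => ?_) (fun i => ?_) i <;> simp

lemma map_perm_ιMultiP {n : ℕ} (α : Dual ℝ (⋀[ℝ]^n V)) (v : Fin n → V)
    (σ : Equiv.Perm (Fin n)) :
    α (ιMultiP n (fun i => v (σ i))) = ((Equiv.Perm.sign σ : ℤ) : ℝ) * α (ιMultiP n v) := by
  have := (ιMultiP (V := V) n).map_perm v σ
  simp only [Function.comp_def] at this
  rw [this, Units.smul_def, map_zsmul, zsmul_eq_mul]

/-! ### Contractions, wedge products and pullbacks -/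

/-- `u ∧ w` and `w ∧ u` differ by a sign that depends on the degrees only. -/
lemma contrBil_append (a m : ℕ) : ∃ s : ℝ, s * s = 1 ∧
    ∀ (α : Dual ℝ (⋀[ℝ]^(a + m) V)) (u : Fin m → V) (w : Fin a → V),
      contrBil (Nat.add_comm m a) (ιMultiP m u) α (ιMultiP a w) =
        s * α (ιMultiP (a + m) (Fin.append w u)) := by
  let σ : Equiv.Perm (Fin (a + m)) := (finCongr (Nat.add_comm a m)).trans finAddFlip
  refine ⟨((Equiv.Perm.sign σ : ℤ) : ℝ), by norm_cast; simp, fun α u w => ?_⟩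
  rw [← map_perm_ιMultiP]
  change α (wedgeBil _ (ιMultiP m u) (ιMultiP a w)) = _
  rw [ιMultiP_append]
  congr 2
  funext i
  obtain ⟨j, rfl⟩ := (finCongr (Nat.add_comm m a)).surjective i
  refine Fin.addCases (fun j => ?_) (fun j => ?_) j <;> simp [σ]

/-- The wedge product as a sum over shuffles, encoded as classes of permutations modulo those
preserving both blocks. -/
lemma formWedgeBil_apply {a m : ℕ} (γ : Dual ℝ (⋀[ℝ]^a V)) (η : Dual ℝ (⋀[ℝ]^m V))
    (v : Fin (a + m) → V) :
    formWedgeBil rfl γ η (ιMultiP (a + m) v) =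
      ∑ σ : Equiv.Perm.ModSumCongr (Fin a) (Fin m),
        TensorProduct.lid ℝ ℝ (AlternatingMap.domCoprod.summand (toAlt γ) (toAlt η) σ
          (fun i => v (finSumFinEquiv i))) := by
  simp only [formWedgeBil, TensorProduct.curry_apply, LinearMap.comp_apply, extendL_ιMultiP]
  simp [AlternatingMap.domCoprod'_apply, AlternatingMap.domCoprod_apply,  map_sum, Function.comp_def]

lemma summand_apply {a m : ℕ} (γ : Dual ℝ (⋀[ℝ]^a V)) (η : Dual ℝ (⋀[ℝ]^m V))
    (σ : Equiv.Perm (Fin a ⊕ Fin m)) (v : Fin a ⊕ Fin m → V) :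
    TensorProduct.lid ℝ ℝ (AlternatingMap.domCoprod.summand (toAlt γ) (toAlt η)
        (Quotient.mk'' σ) v) =
      ((Equiv.Perm.sign σ : ℤ) : ℝ) * (γ (ιMultiP a fun i => v (σ (Sum.inl i))) *
        η (ιMultiP m fun i => v (σ (Sum.inr i)))) := by
  change TensorProduct.lid ℝ ℝ (Equiv.Perm.sign σ •
    (γ (ιMultiP a fun i => v (σ (Sum.inl i))) ⊗ₜ[ℝ] η (ιMultiP m fun i => v (σ (Sum.inr i))))) = _
  rw [Units.smul_def, map_zsmul, TensorProduct.lid_tmul, zsmul_eq_mul, smul_eq_mul]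

/-- If `η` vanishes on every tuple containing one of the `w i`, only the identity shuffle
contributes to `(γ ∧ η)(w, u)`. -/
lemma formWedgeBil_append {a m : ℕ} (γ : Dual ℝ (⋀[ℝ]^a V)) (η : Dual ℝ (⋀[ℝ]^m V))
    (w : Fin a → V) (u : Fin m → V)
    (hη : ∀ x : Fin m → V, ∀ i j, x i = w j → η (ιMultiP m x) = 0) :
    formWedgeBil rfl γ η (ιMultiP (a + m) (Fin.append w u)) =
      γ (ιMultiP a w) * η (ιMultiP m u) := by
  rw [formWedgeBil_apply]
  refine (Fintype.sum_eq_single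
    (Quotient.mk'' 1 : Equiv.Perm.ModSumCongr (Fin a) (Fin m)) ?_).trans ?_
  · intro σ hσ
    induction σ using Quotient.inductionOn' with | _ σ
    rw [summand_apply]
    by_cases h : ∃ i j, σ (Sum.inr i) = Sum.inl j
    · obtain ⟨i, j, hij⟩ := h
      rw [hη _ i j (by simp [hij])]
      simp
    · -- `σ` preserves both blocks, so its class is the identity class
      exfalso
      apply hσ
      push Not at h
      have hr : Set.MapsTo σ (Set.range Sum.inr) (Set.range Sum.inr) := by
        rintro _ ⟨i, rfl⟩
        rcases hi : σ (Sum.inr i) with j | j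
        · exact absurd hi (h i j)
        · exact ⟨j, rfl⟩
      have := Equiv.Perm.mem_sumCongrHom_range_of_perm_mapsTo_inl
        ((Equiv.Perm.perm_mapsTo_inl_iff_mapsTo_inr σ).mpr hr)
      refine Quotient.sound' ?_
      rw [QuotientGroup.leftRel_apply]
      simpa using this
  · rw [summand_apply]
    simp

/-- The pullback is compatible with the wedge product. -/
lemma formWedgeBil_powMap {X : Type*} [AddCommGroup X] [Module ℝ X] (τ : V →ₗ[ℝ] X) {a m : ℕ}
    (β : Dual ℝ (⋀[ℝ]^a X)) (ε : Dual ℝ (⋀[ℝ]^m X)) :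
    formWedgeBil rfl (β.comp (powMap a τ)) (ε.comp (powMap m τ)) =
      (formWedgeBil rfl β ε).comp (powMap (a + m) τ) := by
  apply exteriorPower.linearMap_ext
  ext v
  change formWedgeBil rfl _ _ (ιMultiP (a + m) v) = formWedgeBil rfl β ε (powMap (a + m) τ
    (ιMultiP (a + m) v))
  rw [powMap_ιMultiP, formWedgeBil_apply, formWedgeBil_apply]
  refine Finset.sum_congr rfl fun σ _ => ?_
  induction σ using Quotient.inductionOn' with | _ σ
  simp [summand_apply]

/-! ### Horizontality -/

/-- A form whose double contractions with vectors of `ker τ` vanish is zero on every tuple with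
two entries in `ker τ`. -/
lemma eq_zero_of_horizontal {X : Type*} [AddCommGroup X] [Module ℝ X] (τ : V →ₗ[ℝ] X) {n : ℕ}
    (α : Dual ℝ (⋀[ℝ]^n V))
    (hα : ∀ v w : V, τ v = 0 → τ w = 0 → ∀ (k : ℕ) (hk : k + 2 = n),
        contrBil (show 1 + k = k + 1 by omega) (ιOne w)
            (contrBil (show 1 + (k + 1) = n by omega) (ιOne v) α) = 0)
    (v : Fin n → V) {i j : Fin n} (hij : i ≠ j) (hi : τ (v i) = 0) (hj : τ (v j) = 0) :
    α (ιMultiP n v) = 0 := by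
  obtain ⟨k, rfl⟩ : ∃ k, n = k + 2 := by
    refine ⟨n - 2, ?_⟩
    have := i.2; have := j.2; have := Fin.val_ne_of_ne hij
    omega
  -- a permutation moving `i`, `j` to the first two places
  let σ : Equiv.Perm (Fin (k + 2)) := Equiv.swap 0 i * Equiv.swap 1 (Equiv.swap 0 i j)
  have h0 : σ 0 = i := by
    have : Equiv.swap 0 i j ≠ 0 := fun h => hij (by
      rw [Equiv.swap_apply_eq_iff, Equiv.swap_apply_left] at h; exact h.symm)
    simp only [σ, Equiv.Perm.mul_apply]
    rw [Equiv.swap_apply_of_ne_of_ne (a := (1 : Fin (k + 2))) (by simp) this.symm,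
      Equiv.swap_apply_left]
  have h1 : σ 1 = j := by simp [σ]
  have key := congrArg (fun β => β (ιMultiP k fun l => v (σ l.succ.succ)))
    (hα (v i) (v j) hi hj k rfl)
  have hs : α (ιMultiP (k + 2) fun l => v (σ l)) = 0 := by
    rw [← LinearMap.zero_apply (σ₁₂ := RingHom.id ℝ) (M₂ := ℝ)
      (ιMultiP k fun l => v (σ l.succ.succ)), ← key]
    change _ = α _
    congr 1
    apply Subtype.ext
    simp only [wedgeBil, LinearMap.mk₂_apply, ιMultiP, AlternatingMap.codRestrict_apply_coe, ιOne,
      ExteriorAlgebra.ιMulti_succ_apply]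
    have h1' : σ (Fin.succ 0) = j := h1
    simp only [h0, Matrix.vecTail, Function.comp_def, h1']
  rw [map_perm_ιMultiP] at hs
  rcases mul_eq_zero.mp hs with h | h
  · simp at h
  · exact h

/-! ### Adapted bases -/

/-- A basis of `V` adapted to `τ`: a lift of a basis of `X` together with a basis of `ker τ`. -/
lemma exists_adapted_basis [FiniteDimensional ℝ V] {X : Type*} [AddCommGroup X] [Module ℝ X]
    [FiniteDimensional ℝ X] (τ : V →ₗ[ℝ] X) (hτ : Function.Surjective τ) (n : ℕ)
    (hn : finrank ℝ X = n) :
    ∃ (s : X →ₗ[ℝ] V) (e : Basis (Fin n) ℝ X) (d : ℕ) (b : Basis (Fin n ⊕ Fin d) ℝ V),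
      (∀ i, b (Sum.inl i) = s (e i)) ∧ (∀ i, τ (b (Sum.inl i)) = e i) ∧
        ∀ k, τ (b (Sum.inr k)) = 0 := by
  obtain ⟨s, hs⟩ := τ.exists_rightInverse_of_surjective (LinearMap.range_eq_top.mpr hτ)
  have hs' : ∀ x, τ (s x) = x := fun x => LinearMap.congr_fun hs x
  let p : V →ₗ[ℝ] LinearMap.ker τ := (LinearMap.id - s.comp τ).codRestrict _ (by simp [hs'])
  let E : (X × LinearMap.ker τ) ≃ₗ[ℝ] V :=
    LinearEquiv.ofLinearMap (s.coprod (LinearMap.ker τ).subtype) (τ.prod p)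
      (by ext v; simp [p])
      (by
        apply LinearMap.ext
        rintro ⟨x, k, hk⟩
        have hk' : τ k = 0 := hk
        ext <;> simp [p, hs', hk'])
  refine ⟨s, finBasisOfFinrankEq ℝ X hn, _,
    ((finBasisOfFinrankEq ℝ X hn).prod (finBasis ℝ (LinearMap.ker τ))).map E, ?_, ?_, ?_⟩
  · simp [E]
  · simp [E, hs']
  · simp [E]

/-- The form `ε = e^{f 0} ∧ ⋯ ∧ e^{f (m-1)}` detects, through `γ ∧ τ*ε`, the coefficients of `γ` on
the basis tuples that avoid the vectors `e_{f j}`. -/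
lemma exists_basic_form {X : Type*} [AddCommGroup X] [Module ℝ X] (τ : V →ₗ[ℝ] X) {a m n d : ℕ}
    (e : Basis (Fin n) ℝ X) (b : Basis (Fin n ⊕ Fin d) ℝ V)
    (hl : ∀ i, τ (b (Sum.inl i)) = e i) (hr : ∀ k, τ (b (Sum.inr k)) = 0)
    (f : Fin m → Fin n) (hf : Function.Injective f) :
    ∃ ε : Dual ℝ (⋀[ℝ]^m X), ∀ (γ : Dual ℝ (⋀[ℝ]^a V)) (w : Fin a → Fin n ⊕ Fin d),
      ((∀ i j, w i ≠ Sum.inl (f j)) →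
        formWedgeBil rfl γ (ε.comp (powMap m τ)) (ιMultiP (a + m)
          (Fin.append (fun i => b (w i)) (fun j => b (Sum.inl (f j))))) =
          γ (ιMultiP a fun i => b (w i))) ∧
      ((¬ ∀ i j, w i ≠ Sum.inl (f j)) →
        formWedgeBil rfl γ (ε.comp (powMap m τ)) (ιMultiP (a + m)
          (Fin.append (fun i => b (w i)) (fun j => b (Sum.inl (f j))))) = 0) := by
  let η : X [⋀^Fin m]→ₗ[ℝ] ℝ :=
    Matrix.detRowAlternating.compLinearMap (LinearMap.pi fun j => e.coord (f j))
  have hη : ∀ x, η x = Matrix.det (Matrix.of fun i j => e.coord (f j) (x i)) := fun x => rfl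
  refine ⟨extendL η, fun γ w => ⟨fun h => ?_, fun h => ?_⟩⟩
  · rw [formWedgeBil_append]
    · simp only [LinearMap.comp_apply, powMap_ιMultiP, extendL_ιMultiP, hl]
      rw [hη]
      have : (Matrix.of fun i j => e.coord (f j) (e (f i))) = (1 : Matrix (Fin m) (Fin m) ℝ) := by
        ext i j
        simp [Finsupp.single_apply, Matrix.one_apply, hf.eq_iff]
      rw [this, Matrix.det_one, mul_one]
    · -- the basic form `ε` vanishes on tuples containing a basis vector other than the `e_{f k}`
      intro x i j hx
      simp only [LinearMap.comp_apply, powMap_ιMultiP, extendL_ιMultiP]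
      rw [hη]
      apply Matrix.det_eq_zero_of_row_eq_zero i
      intro k
      rcases hw : w j with l | l
      · have : l ≠ f k := fun hlk => h j k (by rw [hw, hlk])
        simp [hx, hw, hl, this]
      · simp [hx, hw, hr]
  · -- a vector occurs in both blocks of the tuple
    push Not at h
    obtain ⟨i, j, hij⟩ := h
    rw [AlternatingMap.map_eq_zero_of_eq _ _ (i := Fin.castAdd m i) (j := Fin.natAdd a j), map_zero]
    · simp [hij]
    · intro h
      have := congrArg Fin.val h
      have := i.2
      simp at *
      omega

/-- The number of indices from `X` avoided by an injective tuple of basis indices. -/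
lemma card_avoided {a m d : ℕ} (w : Fin a → Fin (a + m) ⊕ Fin d) (hw : Function.Injective w) :
    (Finset.univ.filter fun i : Fin (a + m) => ∀ j, w j ≠ Sum.inl i).card =
      m + (Finset.univ.image w).toRight.card := by
  have h1 := (Finset.univ.image w).card_toLeft_add_card_toRight
  rw [Finset.card_image_of_injective _ hw, Finset.card_univ, Fintype.card_fin] at h1
  have h2 : (Finset.univ.filter fun i : Fin (a + m) => ∀ j, w j ≠ Sum.inl i) =
      ((Finset.univ.image w).toLeft)ᶜ := by
    ext i; simp
  rw [h2, Finset.card_compl, Fintype.card_fin]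
  omega

/-! ### The contraction operator and the criterion -/

/-- The contraction operator `δ = ± ∑_I ι_{e_I} (γ ∧ τ*e^I)`, where `I` runs over the `m`-element
subsets of a basis of `X` and the sign is that of moving `e_I` past an `a`-vector, is diagonal in an
adapted basis: its eigenvalue on a tuple with `q` vertical entries is `(m + q).choose m`. -/
lemma exists_contraction_sum {X : Type*} [AddCommGroup X] [Module ℝ X] (τ : V →ₗ[ℝ] X)
    {a m d : ℕ} (e : Basis (Fin (a + m)) ℝ X) (b : Basis (Fin (a + m) ⊕ Fin d) ℝ V)
    (hl : ∀ i, τ (b (Sum.inl i)) = e i) (hr : ∀ k, τ (b (Sum.inr k)) = 0)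
    (S : Submodule ℝ (Dual ℝ (⋀[ℝ]^(a + m) V))) (γ : Dual ℝ (⋀[ℝ]^a V))
    (hγ : ∀ ε : Dual ℝ (⋀[ℝ]^m X), formWedgeBil rfl γ (ε.comp (powMap m τ)) ∈ S) :
    ∃ δ ∈ Submodule.span ℝ
      {g | ∃ (u : ⋀[ℝ]^m V) (α : Dual ℝ (⋀[ℝ]^(a + m) V)), α ∈ S ∧
        g = contrBil (Nat.add_comm m a) u α},
      ∀ w : Fin a → Fin (a + m) ⊕ Fin d, Function.Injective w →
        δ (ιMultiP a fun i => b (w i)) =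
          ((m + (Finset.univ.image w).toRight.card).choose m : ℝ) *
            γ (ιMultiP a fun i => b (w i)) := by
  obtain ⟨s, hs, hflip⟩ := contrBil_append (V := V) a m
  have key : ∀ I : Finset (Fin (a + m)), ∃ T ∈ Submodule.span ℝ
      {g | ∃ (u : ⋀[ℝ]^m V) (α : Dual ℝ (⋀[ℝ]^(a + m) V)), α ∈ S ∧
        g = contrBil (Nat.add_comm m a) u α},
      I ∈ Finset.powersetCard m Finset.univ → ∀ w : Fin a → Fin (a + m) ⊕ Fin d,
        T (ιMultiP a fun i => b (w i)) =
          if I ⊆ Finset.univ.filter (fun i => ∀ j, w j ≠ Sum.inl i) then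
            γ (ιMultiP a fun i => b (w i)) else 0 := by
    intro I
    by_cases hI : I ∈ Finset.powersetCard m Finset.univ
    swap
    · exact ⟨0, zero_mem _, fun h => absurd h hI⟩
    have hcard : I.card = m := (Finset.mem_powersetCard.mp hI).2
    obtain ⟨ε, hε⟩ := exists_basic_form (a := a) τ e b hl hr (I.orderEmbOfFin hcard)
      (I.orderEmbOfFin hcard).injective
    refine ⟨s • contrBil (Nat.add_comm m a)
      (ιMultiP m fun j => b (Sum.inl (I.orderEmbOfFin hcard j)))
      (formWedgeBil rfl γ (ε.comp (powMap m τ))),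
      Submodule.smul_mem _ _ (Submodule.subset_span ⟨_, _, hγ ε, rfl⟩), fun _ w => ?_⟩
    have hiff : I ⊆ Finset.univ.filter (fun i => ∀ j, w j ≠ Sum.inl i) ↔
        ∀ i j, w i ≠ Sum.inl (I.orderEmbOfFin hcard j) := by
      constructor
      · intro h i j
        exact (Finset.mem_filter.mp (h (I.orderEmbOfFin_mem hcard j))).2 i
      · intro h x hx
        have : x ∈ Set.range (I.orderEmbOfFin hcard) := by
          rw [Finset.range_orderEmbOfFin]; exact hx
        obtain ⟨j, rfl⟩ := this
        simpa using fun i => h i j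
    rw [LinearMap.smul_apply, hflip, smul_eq_mul, ← mul_assoc, hs, one_mul]
    split_ifs with h
    · exact (hε γ w).1 (hiff.mp h)
    · exact (hε γ w).2 (fun h' => h (hiff.mpr h'))
  choose T hT hTw using key
  refine ⟨∑ I ∈ Finset.powersetCard m Finset.univ, T I, Submodule.sum_mem _ fun I _ => hT I,
    fun w hw => ?_⟩
  rw [LinearMap.sum_apply, Finset.sum_congr rfl fun I hI => hTw I hI w, ← Finset.sum_filter,
    Finset.sum_const, nsmul_eq_mul, ← card_avoided w hw, ← Finset.card_powersetCard]
  congr 3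
  ext I
  simp [Finset.mem_powersetCard, and_comm]

/-- A form `γ` whose wedge products with all basic forms are `(n-1)`-horizontal vanishes on basis
tuples with two vertical entries. -/
lemma eq_zero_of_two_vertical {X : Type*} [AddCommGroup X] [Module ℝ X] (τ : V →ₗ[ℝ] X)
    {a m d : ℕ} (e : Basis (Fin (a + m)) ℝ X) (b : Basis (Fin (a + m) ⊕ Fin d) ℝ V)
    (hl : ∀ i, τ (b (Sum.inl i)) = e i) (hr : ∀ k, τ (b (Sum.inr k)) = 0)
    (γ : Dual ℝ (⋀[ℝ]^a V))
    (hγ : ∀ (ε : Dual ℝ (⋀[ℝ]^m X)) (v : Fin (a + m) → V) (i j : Fin (a + m)), i ≠ j →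
      τ (v i) = 0 → τ (v j) = 0 →
      formWedgeBil rfl γ (ε.comp (powMap m τ)) (ιMultiP (a + m) v) = 0)
    (w : Fin a → Fin (a + m) ⊕ Fin d) (hw : Function.Injective w)
    (h2 : 1 < (Finset.univ.image w).toRight.card) :
    γ (ιMultiP a fun i => b (w i)) = 0 := by
  obtain ⟨I, hI, hcard⟩ := Finset.exists_subset_card_eq
    (show m ≤ (Finset.univ.filter fun i : Fin (a + m) => ∀ j, w j ≠ Sum.inl i).card by
      rw [card_avoided w hw]; omega)
  obtain ⟨ε, hε⟩ := exists_basic_form (a := a) τ e b hl hr (I.orderEmbOfFin hcard)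
      (I.orderEmbOfFin hcard).injective
  rw [← (hε γ w).1 fun i j =>
    (Finset.mem_filter.mp (hI (I.orderEmbOfFin_mem hcard j))).2 i]
  obtain ⟨k, hk, l, hkl, hne⟩ := Finset.one_lt_card.mp h2
  simp only [Finset.mem_toRight, Finset.mem_image, Finset.mem_univ, true_and] at hk hkl
  obtain ⟨i, hi⟩ := hk
  obtain ⟨j, hj⟩ := hkl
  apply hγ ε _ (Fin.castAdd m i) (Fin.castAdd m j)
  · intro h
    have hij : i = j := Fin.castAdd_injective a m h
    subst hij
    exact hne (Sum.inr_injective (hi.symm.trans hj))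
  · simp [hi, hr]
  · simp [hj, hr]

/-- The criterion with `n` written as `a + m`, and horizontality expressed on tuples. -/
lemma criterion_add [FiniteDimensional ℝ V] {X : Type*} [AddCommGroup X] [Module ℝ X]
    [FiniteDimensional ℝ X] (τ : V →ₗ[ℝ] X) (hτ : Function.Surjective τ) (a m : ℕ)
    (hn : finrank ℝ X = a + m) (S : Submodule ℝ (Dual ℝ (⋀[ℝ]^(a + m) V)))
    (hhoriz : ∀ α ∈ S, ∀ (v : Fin (a + m) → V) (i j : Fin (a + m)), i ≠ j →
      τ (v i) = 0 → τ (v j) = 0 → α (ιMultiP (a + m) v) = 0)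
    (hbasic : ∀ ε : Dual ℝ (⋀[ℝ]^(a + m) X), ε.comp (powMap (a + m) τ) ∈ S)
    (γ : Dual ℝ (⋀[ℝ]^a V))
    (hγ : ∀ ε : Dual ℝ (⋀[ℝ]^m X), formWedgeBil rfl γ (ε.comp (powMap m τ)) ∈ S) :
    γ ∈ Submodule.span ℝ
      {g | ∃ (u : ⋀[ℝ]^m V) (α : Dual ℝ (⋀[ℝ]^(a + m) V)), α ∈ S ∧
        g = contrBil (Nat.add_comm m a) u α} := by
  obtain ⟨s, e, d, b, hb, hl, hr⟩ := exists_adapted_basis τ hτ _ hn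
  obtain ⟨δ, hδ, hδw⟩ := exists_contraction_sum τ e b hl hr S γ hγ
  -- the basic component of `γ`
  let γ₀ : Dual ℝ (⋀[ℝ]^a V) := (γ.comp (powMap a s)).comp (powMap a τ)
  obtain ⟨δ₀, hδ₀, hδ₀w⟩ := exists_contraction_sum τ e b hl hr S γ₀ fun ε => by
    rw [formWedgeBil_powMap]
    exact hbasic _
  have hγ₀ : ∀ w : Fin a → Fin (a + m) ⊕ Fin d, γ₀ (ιMultiP a fun i => b (w i)) =
      γ (ιMultiP a fun i => s (τ (b (w i)))) := fun w => by
    simp [γ₀]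
  have hm : (m + 1 : ℝ) ≠ 0 := by positivity
  -- the coefficients solve `x + y = 1` (no vertical entry) and `(m + 1) x = 1` (one such entry)
  have key : γ = (m + 1 : ℝ)⁻¹ • δ + (1 - (m + 1 : ℝ)⁻¹) • δ₀ := by
    refine dual_ext b fun w hw => ?_
    simp only [LinearMap.add_apply, LinearMap.smul_apply, smul_eq_mul, hδw w hw, hδ₀w w hw, hγ₀]
    rcases Nat.eq_zero_or_pos (Finset.univ.image w).toRight.card with h0 | h0
    · have hst : ∀ i, s (τ (b (w i))) = b (w i) := by
        intro i
        rcases hi : w i with k | k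
        · rw [hl, hb]
        · have : k ∈ (Finset.univ.image w).toRight := by
            rw [Finset.mem_toRight, ← hi]; simp
          rw [Finset.card_eq_zero.mp h0] at this
          simp at this
      simp only [hst, h0, add_zero, Nat.choose_self, Nat.cast_one]
      ring
    · have hz : γ (ιMultiP a fun i => s (τ (b (w i)))) = 0 := by
        obtain ⟨k, hk⟩ := Finset.card_pos.mp h0
        simp only [Finset.mem_toRight, Finset.mem_image, Finset.mem_univ, true_and] at hk
        obtain ⟨i, hi⟩ := hk
        rw [AlternatingMap.map_coord_zero _ i (by simp [hi, hr]), map_zero]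
      rw [hz]
      rcases Nat.lt_or_ge 1 (Finset.univ.image w).toRight.card with h2 | h2
      · rw [eq_zero_of_two_vertical τ e b hl hr γ (fun ε => hhoriz _ (hγ ε)) w hw h2]
        simp
      · rw [show (Finset.univ.image w).toRight.card = 1 by omega, Nat.choose_succ_self_right]
        push_cast
        field_simp
        simp
  rw [key]
  exact Submodule.add_mem _ (Submodule.smul_mem _ _ hδ) (Submodule.smul_mem _ _ hδ₀)

/-- Removes the literal shape `a + m` of the degree, so that `m` can be taken to be `n - a`. -/
lemma criterion_of_add_eq [FiniteDimensional ℝ V] {X : Type*} [AddCommGroup X] [Module ℝ X]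
    [FiniteDimensional ℝ X] (τ : V →ₗ[ℝ] X) (hτ : Function.Surjective τ) (a m n : ℕ)
    (h : a + m = n) (hn : finrank ℝ X = n) (S : Submodule ℝ (Dual ℝ (⋀[ℝ]^n V)))
    (hhoriz : ∀ α ∈ S, ∀ (v : Fin n → V) (i j : Fin n), i ≠ j →
      τ (v i) = 0 → τ (v j) = 0 → α (ιMultiP n v) = 0)
    (hbasic : ∀ ε : Dual ℝ (⋀[ℝ]^n X), ε.comp (powMap n τ) ∈ S)
    (γ : Dual ℝ (⋀[ℝ]^a V))
    (hγ : ∀ ε : Dual ℝ (⋀[ℝ]^m X), formWedgeBil h γ (ε.comp (powMap m τ)) ∈ S) :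
    γ ∈ Submodule.span ℝ
      {g | ∃ (u : ⋀[ℝ]^m V) (α : Dual ℝ (⋀[ℝ]^n V)), α ∈ S ∧
        g = contrBil ((Nat.add_comm m a).trans h) u α} := by
  subst h
  exact criterion_add τ hτ a m hn S hhoriz hbasic γ hγ

/-- If every `γ ∧ τ*ε` (for basic `ε`) lies in a space `S` of
`(n-1)`-horizontal `n`-forms containing all basic `n`-forms, then `γ` lies in the
span of contractions of elements of `S`. -/
theorem horizontal_wedge_criterion
    [FiniteDimensional ℝ V] {X : Type*} [AddCommGroup X] [Module ℝ X]
    [FiniteDimensional ℝ X]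
    (τ : V →ₗ[ℝ] X) (hτ : Function.Surjective τ)
    (n : ℕ) (hn : Module.finrank ℝ X = n)
    (S : Submodule ℝ (Dual ℝ (⋀[ℝ]^n V)))
    (hhoriz : ∀ α ∈ S, ∀ v w : V, τ v = 0 → τ w = 0 →
      ∀ (k : ℕ) (hk : k + 2 = n),
        contrBil (show 1 + k = k + 1 by omega) (ιOne w)
            (contrBil (show 1 + (k + 1) = n by omega) (ιOne v) α) = 0)
    (hbasic : ∀ ε : Dual ℝ (⋀[ℝ]^n X), ε.comp (powMap n τ) ∈ S)
    (a : ℕ) (han : a ≤ n) (γ : Dual ℝ (⋀[ℝ]^a V))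
    (hγ : ∀ ε : Dual ℝ (⋀[ℝ]^(n - a) X),
      formWedgeBil (show a + (n - a) = n by omega) γ (ε.comp (powMap (n - a) τ)) ∈ S) :
    γ ∈ Submodule.span ℝ
      {g | ∃ (u : ⋀[ℝ]^(n - a) V) (α : Dual ℝ (⋀[ℝ]^n V)), α ∈ S ∧
        g = contrBil (show (n - a) + a = n by omega) u α} := by
  have hγ' := fun α (hα : α ∈ S) (v : Fin n → V) i j (hij : i ≠ j) =>
    eq_zero_of_horizontal τ α (hhoriz α hα) v hij
  exact criterion_of_add_eq τ hτ a (n - a) n (by omega) hn S hγ' hbasic γ hγ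

end GPB
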